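/- Let α ∈ (0,1], let u be a classical solution of the localized fractional heat equation, and let C₀ ≥ 0 satisfy: sup_{[−1,0]×B_1^+} |u| ≤ C₀; ‖u‖_{C^α({−1}×closure(B_1^+))} ≤ C₀ (Hölder in (x,y) on the initial slice); ‖u‖_{C^α([−1,0]×∂B_1^0)} ≤ C₀ (Hölder in (t,x) on the lateral boundary y = 0, where ∂B_1^0 = {x : |x| = 1}); and ‖u(t,·,·)‖_{C^α(closure((∂B_1)^+))} ≤ C₀ for every t ∈ [−1,0]. Then there exist constants C > 0 and α̃ ∈ (0,1), depending only on s, n and α, such that for every (t,x,y) ∈ [−1,0] × closure(B_1^+) the following holds: if y > 0 and (x*,y*) is a point of closure((∂B_1)^+) at minimal Euclidean distance from (x,y), then with t* = t, |u(t,x,y) − u(t*,x*,y*)| ≤ C C₀ (|x−x*| + |y−y*|)^{α̃}; and if y = 0 and (t*,x*) is a point of ({−1} × closure(B_1^0)) ∪ ([−1,0] × ∂B_1^0) at minimal Euclidean distance from (t,x), then |u(t,x,0) − u(t*,x*,0)| ≤ C C₀ (|x−x*| + |t−t*|)^{α̃}. -/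

import Mathlib

open Set Filter Topology MeasureTheory
open scoped RealInnerProductSpace

noncomputable section

abbrev En (n : ℕ) := EuclideanSpace ℝ (Fin n)

/-- The open upper half ball `B_r^+`. -/
def halfBall (n : ℕ) (r : ℝ) : Set (En n × ℝ) :=
  {p | ‖p.1‖ ^ 2 + p.2 ^ 2 < r ^ 2 ∧ 0 < p.2}

/-- The closure of the upper half ball. -/
def closedHalfBall (n : ℕ) (r : ℝ) : Set (En n × ℝ) :=
  {p | ‖p.1‖ ^ 2 + p.2 ^ 2 ≤ r ^ 2 ∧ 0 ≤ p.2}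

/-- `B_r^+ ∪ B_r^0`. -/
def halfBallWithBase (n : ℕ) (r : ℝ) : Set (En n × ℝ) :=
  {p | ‖p.1‖ ^ 2 + p.2 ^ 2 < r ^ 2 ∧ 0 ≤ p.2}

/-- The flat ball `B_r^0` in `ℝⁿ`. -/
def flatBall (n : ℕ) (r : ℝ) : Set (En n) := {x | ‖x‖ < r}

/-- `(∂B_1)^+`. -/
def spherePlus (n : ℕ) : Set (En n × ℝ) := {p | ‖p.1‖ ^ 2 + p.2 ^ 2 = 1 ∧ 0 < p.2}

/-- closure of `(∂B_1)^+`. -/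
def closedSpherePlus (n : ℕ) : Set (En n × ℝ) := {p | ‖p.1‖ ^ 2 + p.2 ^ 2 = 1 ∧ 0 ≤ p.2}

/-- Second directional derivative of `u` at `p` in direction `v`. -/
def D2 {n : ℕ} (u : En n × ℝ → ℝ) (p v : En n × ℝ) : ℝ :=
  fderiv ℝ (fun q => fderiv ℝ u q v) p v

/-- The Laplacian in the `n+1` variables `(x, y)`. -/
def lap {n : ℕ} (u : En n × ℝ → ℝ) (p : En n × ℝ) : ℝ :=
  (∑ i : Fin n, D2 u p (EuclideanSpace.single i 1, 0)) + D2 u p (0, 1)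

/-- `u` is `a`-harmonic on `Ω`: it is `C²` there and `Δu + (a/y) ∂_y u = 0`. -/
def IsAHarmonicOn {n : ℕ} (a : ℝ) (u : En n × ℝ → ℝ) (Ω : Set (En n × ℝ)) : Prop :=
  ContDiffOn ℝ 2 u Ω ∧ ∀ p ∈ Ω, lap u p + (a / p.2) * fderiv ℝ u p (0, 1) = 0

/-- `lim_{y → 0⁺} y^a ∂_y w(x, y) = L`. -/
def NormalDerivLimit {n : ℕ} (a : ℝ) (w : En n × ℝ → ℝ) (x : En n) (L : ℝ) : Prop :=
  Tendsto (fun y : ℝ => y ^ a * fderiv ℝ w (x, y) (0, 1)) (𝓝[>] (0 : ℝ)) (𝓝 L)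

/-- The boundary-restriction `(t, x) ↦ u(t, x, 0)`. -/
def bdryFun {n : ℕ} (u : ℝ → En n × ℝ → ℝ) : ℝ × En n → ℝ := fun q => u q.1 (q.2, 0)

/-- A classical solution of the extended drift–diffusion equation on
`[-1,0] × closure (B_1^+)` with drift `b` and right-hand side `f`. -/
def IsExtDDSolution {n : ℕ} (a : ℝ) (b : ℝ → En n → En n) (f : ℝ → En n → ℝ)
    (u : ℝ → En n × ℝ → ℝ) : Prop :=
  ContinuousOn (fun q : ℝ × (En n × ℝ) => u q.1 q.2) (Icc (-1 : ℝ) 0 ×ˢ closedHalfBall n 1) ∧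
  (∀ t ∈ Icc (-1 : ℝ) 0, IsAHarmonicOn a (u t) (halfBall n 1)) ∧
  (∀ q ∈ Ioc (-1 : ℝ) 0 ×ˢ flatBall n 1,
      DifferentiableWithinAt ℝ (bdryFun u) (Ioc (-1 : ℝ) 0 ×ˢ flatBall n 1) q) ∧
  (∀ t x, (t, x) ∈ Ioc (-1 : ℝ) 0 ×ˢ flatBall n 1 →
      ∃ L : ℝ, NormalDerivLimit a (u t) x L ∧
        fderivWithin ℝ (bdryFun u) (Ioc (-1 : ℝ) 0 ×ˢ flatBall n 1) (t, x) (1, 0) +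
          fderivWithin ℝ (bdryFun u) (Ioc (-1 : ℝ) 0 ×ˢ flatBall n 1) (t, x) (0, b t x) -
          L = f t x)

/-- A classical solution of the localized fractional heat equation on
`[-1,0] × closure (B_1^+)`. -/
def IsFracHeatSolution {n : ℕ} (a : ℝ) (u : ℝ → En n × ℝ → ℝ) : Prop :=
  ContinuousOn (fun q : ℝ × (En n × ℝ) => u q.1 q.2) (Icc (-1 : ℝ) 0 ×ˢ closedHalfBall n 1) ∧
  (∀ t ∈ Icc (-1 : ℝ) 0, IsAHarmonicOn a (u t) (halfBall n 1)) ∧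
  (∀ t ∈ Ioc (-1 : ℝ) 0, ∀ x ∈ flatBall n 1,
      DifferentiableWithinAt ℝ (fun τ => u τ (x, 0)) (Ioc (-1 : ℝ) 0) t ∧
      NormalDerivLimit a (u t) x (derivWithin (fun τ => u τ (x, 0)) (Ioc (-1 : ℝ) 0) t))


lemma second_deriv_test (f f' : ℝ → ℝ) (f2 r0 : ℝ)
    (hf : ∀ᶠ r in 𝓝 r0, HasDerivAt f (f' r) r) (hf' : HasDerivAt f' f2 r0)
    (hmax : IsLocalMax f r0) : f' r0 = 0 ∧ f2 ≤ 0 := by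
  have h0 : HasDerivAt f (f' r0) r0 := hf.self_of_nhds
  have e1 : f' r0 = 0 := hmax.hasDerivAt_eq_zero h0
  refine ⟨e1, ?_⟩
  by_contra hc
  push Not at hc
  have e2 : deriv f =ᶠ[𝓝 r0] f' := hf.mono fun r hr => hr.deriv
  have e3 : deriv (deriv f) r0 = f2 := by rw [e2.deriv_eq]; exact hf'.deriv
  have hmin : IsLocalMin f r0 := by
    apply isLocalMin_of_deriv_deriv_pos
    · rw [e3]; exact hc
    · rw [h0.deriv, e1]
    · exact h0.continuousAt
  have e4 : f =ᶠ[𝓝 r0] fun _ => f r0 := by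
    filter_upwards [hmax, hmin] with r h1 h2
    exact le_antisymm h1 h2
  have e5 : deriv f =ᶠ[𝓝 r0] fun _ => 0 := by
    have := e4.deriv
    simpa using this
  have e6 : deriv (deriv f) r0 = 0 := by rw [e5.deriv_eq]; simp
  linarith

lemma slice_deriv {n : ℕ} (u : En n × ℝ → ℝ) (p v : En n × ℝ) (hu : ContDiffAt ℝ 2 u p) :
    (∀ᶠ r in 𝓝 (0:ℝ), HasDerivAt (fun r : ℝ => u (p + r • v)) (fderiv ℝ u (p + r • v) v) r) ∧
    HasDerivAt (fun r : ℝ => fderiv ℝ u (p + r • v) v) (D2 u p v) 0 := by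
  have hl : ∀ r : ℝ, HasDerivAt (fun r : ℝ => p + r • v) v r := by
    intro r
    have := ((hasDerivAt_id r).smul_const v).const_add p
    simpa using this
  have hp : p = p + (0:ℝ) • v := by simp
  have ht : Tendsto (fun r : ℝ => p + r • v) (𝓝 0) (𝓝 p) := by
    have := (hl 0).continuousAt
    unfold ContinuousAt at this
    simpa using this
  constructor
  · have h1 : ∀ᶠ q in 𝓝 p, ContDiffAt ℝ 2 u q := hu.eventually (by simp)
    filter_upwards [ht.eventually h1] with r hr
    have hd : DifferentiableAt ℝ u (p + r • v) := hr.differentiableAt (by simp)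
    exact hd.hasFDerivAt.comp_hasDerivAt r (hl r)
  · have h2 : ContDiffAt ℝ 1 (fderiv ℝ u) p := hu.fderiv_right (by norm_num)
    have h3 : DifferentiableAt ℝ (fun q => fderiv ℝ u q v) p :=
      (h2.differentiableAt (by simp)).clm_apply (differentiableAt_const v)
    have h4 : HasFDerivAt (fun q => fderiv ℝ u q v) (fderiv ℝ (fun q => fderiv ℝ u q v) p)
      (p + (0:ℝ) • v) := by
      rw [← hp]; exact h3.hasFDerivAt
    exact h4.comp_hasDerivAt (0:ℝ) (hl 0)

/-- Barrier. -/
def barr {n : ℕ} (s c k e m l h : ℝ) (b : En n) (t : ℝ) (p : En n × ℝ) : ℝ :=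
  c + k * t + ⟪b, p.1⟫ + e * p.2 + m * ‖p.1‖ ^ 2 + l * p.2 ^ 2 + h * p.2 ^ (2 * s)

lemma isOpen_halfBall (n : ℕ) (r : ℝ) : IsOpen (halfBall n r) := by
  have h1 : IsOpen {p : En n × ℝ | ‖p.1‖ ^ 2 + p.2 ^ 2 < r ^ 2} :=
    isOpen_lt (by fun_prop) (by fun_prop)
  have h2 : IsOpen {p : En n × ℝ | 0 < p.2} := isOpen_lt (by fun_prop) (by fun_prop)
  exact h1.inter h2

lemma barr_continuous {n : ℕ} (s c k e m l h : ℝ) (hs : 0 < s) (b : En n) :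
    Continuous (fun q : ℝ × (En n × ℝ) => barr s c k e m l h b q.1 q.2) := by
  unfold barr
  have : Continuous (fun q : ℝ × (En n × ℝ) => q.2.2 ^ (2 * s)) :=
    Continuous.rpow_const (by fun_prop) (fun _ => Or.inr (by linarith))
  fun_prop

lemma barr_deriv_y {n : ℕ} (s c k e m l h : ℝ) (b : En n) (t : ℝ) (x : En n) (y : ℝ) (hy : 0 < y) :
    HasDerivAt (fun y => barr s c k e m l h b t (x, y))
      (e + 2 * l * y + h * (2 * s * y ^ (2 * s - 1))) y := by
  unfold barr
  have h1 : HasDerivAt (fun y : ℝ => y ^ (2 * s)) (2 * s * y ^ (2 * s - 1)) y :=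
    Real.hasDerivAt_rpow_const (Or.inl hy.ne')
  have := ((((hasDerivAt_id y).const_mul e).const_add (c + k * t + ⟪b, x⟫)).add_const
    (m * ‖x‖ ^ 2)).add (((hasDerivAt_pow 2 y).const_mul l)) |>.add (h1.const_mul h)
  refine this.congr_deriv ?_
  simp; ring

lemma no_interior_max {n : ℕ} (s c k e m l h : ℝ) (b : En n) (t : ℝ)
    (u : En n × ℝ → ℝ) (hs : s < 1 / 2) (hu : IsAHarmonicOn (1 - 2 * s) u (halfBall n 1))
    (he : e ≤ 0) (hL : 2 * n * m + 2 * l * (2 - 2 * s) < 0) (p : En n × ℝ) (hp : p ∈ halfBall n 1)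
    (hmax : IsLocalMax (fun q => u q - barr s c k e m l h b t q) p) : False := by
  have hcd : ContDiffAt ℝ 2 u p := hu.1.contDiffAt ((isOpen_halfBall n 1).mem_nhds hp)
  have hpde := hu.2 p hp
  obtain ⟨x, y⟩ := p
  have hy : 0 < y := hp.2
  -- slices of maximum
  have hsl : ∀ v : En n × ℝ, IsLocalMax
      (fun r : ℝ => u ((x, y) + r • v) - barr s c k e m l h b t ((x, y) + r • v)) 0 := by
    intro v
    have hc : ContinuousAt (fun r : ℝ => (x, y) + r • v) 0 := by fun_prop
    have hm : IsLocalMax (fun q => u q - barr s c k e m l h b t q)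
      ((fun r : ℝ => (x, y) + r • v) 0) := by simpa using hmax
    exact hc.tendsto.eventually hm
  have hx : ∀ i : Fin n, D2 u (x, y) (EuclideanSpace.single i 1, 0) ≤ 2 * m := by
    intro i
    set v : En n := EuclideanSpace.single i 1 with hv
    have hvn : ‖v‖ = 1 := by simp [hv]
    obtain ⟨h1, h2⟩ := slice_deriv u (x, y) (v, 0) hcd
    have hb : ∀ r : ℝ, HasDerivAt
        (fun r : ℝ => barr s c k e m l h b t ((x, y) + r • ((v, 0) : En n × ℝ)))
        (⟪b, v⟫ + m * (2 * ⟪x, v⟫ + 2 * r)) r := by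
      intro r
      have : (fun r : ℝ => barr s c k e m l h b t ((x, y) + r • ((v, 0) : En n × ℝ))) =
        fun r : ℝ => (c + k * t + ⟪b, x⟫ + e * y + m * ‖x‖ ^ 2 + l * y ^ 2 + h * y ^ (2 * s))
          + ((⟪b, v⟫ + m * (2 * ⟪x, v⟫)) * r + m * r ^ 2) := by
        funext r
        simp only [barr, Prod.fst_add, Prod.snd_add, Prod.smul_fst, Prod.smul_snd, smul_zero,
          add_zero, inner_add_right, inner_smul_right, norm_add_sq_real, norm_smul, hvn]
        simp only [Real.norm_eq_abs, mul_one, sq_abs]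
        ring
      rw [this]
      have := (((hasDerivAt_id r).const_mul (⟪b, v⟫ + m * (2 * ⟪x, v⟫))).add
        ((hasDerivAt_pow 2 r).const_mul m)).const_add
        (c + k * t + ⟪b, x⟫ + e * y + m * ‖x‖ ^ 2 + l * y ^ 2 + h * y ^ (2 * s))
      refine this.congr_deriv ?_
      simp; ring
    have hb2 : HasDerivAt (fun r : ℝ => ⟪b, v⟫ + m * (2 * ⟪x, v⟫ + 2 * r)) (2 * m) 0 := by
      have := ((((hasDerivAt_id (0:ℝ)).const_mul 2).const_add (2 * ⟪x, v⟫)).const_mul m).const_add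
        ⟪b, v⟫
      refine this.congr_deriv ?_
      ring
    have := second_deriv_test _ _ _ 0 (h1.mono fun r hr => hr.sub (hb r)) (h2.sub hb2) (hsl (v, 0))
    linarith [this.2]
  obtain ⟨h1, h2⟩ := slice_deriv u (x, y) (0, 1) hcd
  have hbe : (fun r : ℝ => barr s c k e m l h b t ((x, y) + r • ((0, 1) : En n × ℝ))) =
      fun r : ℝ => barr s c k e m l h b t (x, y + r) := by
    funext r; simp
  have hb : ∀ᶠ r in 𝓝 (0:ℝ), HasDerivAt
      (fun r : ℝ => barr s c k e m l h b t ((x, y) + r • ((0, 1) : En n × ℝ)))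
      (e + 2 * l * (y + r) + h * (2 * s * (y + r) ^ (2 * s - 1))) r := by
    filter_upwards [lt_mem_nhds (show -y < 0 by linarith)] with r hr
    rw [hbe]
    have := barr_deriv_y s c k e m l h b t x (y + r) (by linarith)
    exact this.comp_const_add y r
  have hb2 : HasDerivAt (fun r : ℝ => e + 2 * l * (y + r) + h * (2 * s * (y + r) ^ (2 * s - 1)))
      (2 * l + h * (2 * s * ((2 * s - 1) * y ^ (2 * s - 1 - 1)))) 0 := by
    have h3 : HasDerivAt (fun y : ℝ => y ^ (2 * s - 1)) ((2 * s - 1) * (y + 0) ^ (2 * s - 1 - 1))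
        (y + 0) :=
      Real.hasDerivAt_rpow_const (Or.inl (by linarith))
    have h4 := h3.comp_const_add y 0
    have h5 : HasDerivAt (fun r : ℝ => y + r) 1 0 := (hasDerivAt_id (0:ℝ)).const_add y
    have := ((h5.const_mul (2 * l)).const_add e).add ((h4.const_mul (2 * s)).const_mul h)
    refine this.congr_deriv ?_
    rw [add_zero, mul_one]
  obtain ⟨g1, g2⟩ := second_deriv_test _ _ _ 0 (by
    filter_upwards [h1, hb] with r hr hr2 using hr.sub hr2) (h2.sub hb2) (hsl (0, 1))
  have hsum : ∑ i : Fin n, D2 u (x, y) (EuclideanSpace.single i 1, 0) ≤ n * (2 * m) := by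
    calc _ ≤ ∑ i : Fin n, 2 * m := Finset.sum_le_sum fun i _ => hx i
      _ = _ := by simp
  have g1' : fderiv ℝ u (x, y) (0, 1) = e + 2 * l * y + h * (2 * s * y ^ (2 * s - 1)) := by
    simp only [Pi.sub_apply, zero_smul, add_zero] at g1
    linarith
  simp only [lap] at hpde
  rw [g1'] at hpde
  have hpow : y ^ (2 * s - 1) = y ^ (2 * s - 1 - 1) * y := by
    rw [← Real.rpow_add_one hy.ne']; congr 1; ring
  have key : (1 - 2 * s) / y * (e + 2 * l * y + h * (2 * s * y ^ (2 * s - 1))) =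
    (1 - 2 * s) * e / y + 2 * l * (1 - 2 * s)
      + (1 - 2 * s) * h * (2 * s * y ^ (2 * s - 1 - 1)) := by
    rw [hpow]; field_simp
  rw [key] at hpde
  have hneg : (1 - 2 * s) * e / y ≤ 0 :=
    div_nonpos_of_nonpos_of_nonneg (mul_nonpos_of_nonneg_of_nonpos (by linarith) he) hy.le
  nlinarith

lemma isCompact_closedHalfBall (n : ℕ) : IsCompact (closedHalfBall n 1) := by
  have hc : IsClosed (closedHalfBall n 1) := by
    have h1 : IsClosed {p : En n × ℝ | ‖p.1‖ ^ 2 + p.2 ^ 2 ≤ 1 ^ 2} :=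
      isClosed_le (by fun_prop) (by fun_prop)
    have h2 : IsClosed {p : En n × ℝ | 0 ≤ p.2} := isClosed_le (by fun_prop) (by fun_prop)
    exact h1.inter h2
  apply Metric.isCompact_of_isClosed_isBounded hc
  apply Bornology.IsBounded.subset (Metric.isBounded_closedBall (x := (0 : En n × ℝ)) (r := 1))
  rintro ⟨x, y⟩ ⟨h1, h2⟩
  simp only at h1 h2
  rw [mem_closedBall_zero_iff, Prod.norm_def]
  have := norm_nonneg x
  apply max_le
  · simp only; nlinarith
  · simp only [Real.norm_eq_abs]; rw [abs_of_nonneg h2]; nlinarith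

lemma elliptic_comparison {n : ℕ} (s c k e m l h : ℝ) (b : En n) (t : ℝ)
    (u : En n × ℝ → ℝ) (hs0 : 0 < s) (hs : s < 1 / 2)
    (hu : IsAHarmonicOn (1 - 2 * s) u (halfBall n 1))
    (hcont : ContinuousOn u (closedHalfBall n 1))
    (he : e ≤ 0) (hL : 2 * n * m + 2 * l * (2 - 2 * s) ≤ 0)
    (h1 : ∀ p ∈ closedSpherePlus n, u p ≤ barr s c k e m l h b t p)
    (h2 : ∀ x : En n, ‖x‖ ≤ 1 → u (x, 0) ≤ barr s c k e m l h b t (x, 0)) :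
    ∀ p ∈ closedHalfBall n 1, u p ≤ barr s c k e m l h b t p := by
  intro p hp
  by_contra hc
  push Not at hc
  set ε := (u p - barr s c k e m l h b t p) / 4 with hε
  have hε0 : 0 < ε := by rw [hε]; linarith
  have hform : ∀ q, barr s (c + 2 * ε) k e m (l - ε) h b t q =
      barr s c k e m l h b t q + ε * (2 - q.2 ^ 2) := by
    intro q; simp only [barr]; ring
  have hbc : Continuous (fun q : En n × ℝ => barr s (c + 2 * ε) k e m (l - ε) h b t q) :=
    (barr_continuous s (c + 2 * ε) k e m (l - ε) h hs0 b).comp (by fun_prop :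
      Continuous fun q : En n × ℝ => (t, q))
  obtain ⟨q, hq, hqm⟩ := (isCompact_closedHalfBall n).exists_isMaxOn ⟨p, hp⟩
    (hcont.sub hbc.continuousOn)
  have hqp := hqm hp
  simp only [mem_ofPred_eq, Pi.sub_apply, hform] at hqp
  have hp2 : p.2 ^ 2 ≤ 1 := by nlinarith [hp.1, sq_nonneg ‖p.1‖]
  have hq2 : q.2 ^ 2 ≤ 1 := by nlinarith [hq.1, sq_nonneg ‖q.1‖]
  have hqpos : 0 < u q - barr s c k e m l h b t q := by nlinarith [sq_nonneg p.2, sq_nonneg q.2]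
  rcases hq.2.eq_or_lt with hy | hy
  · have := h2 q.1 (by have := hq.1; rw [← hy] at this; nlinarith [norm_nonneg q.1])
    rw [show (q.1, (0:ℝ)) = q by rw [hy]] at this
    linarith
  rcases hq.1.eq_or_lt with hS | hS
  · have := h1 q ⟨by linarith, hy.le⟩
    linarith
  have hqi : q ∈ halfBall n 1 := ⟨hS, hy⟩
  refine no_interior_max s (c + 2 * ε) k e m (l - ε) h b t u hs hu he (by nlinarith) q hqi ?_
  refine hqm.isLocalMax (mem_of_superset ((isOpen_halfBall n 1).mem_nhds hqi) ?_)
  exact fun z hz => ⟨hz.1.le, hz.2.le⟩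

lemma parabolic_comparison {n : ℕ} (s c k e m l h : ℝ) (b : En n) (T : ℝ)
    (hT : T ∈ Icc (-1:ℝ) 0)
    (u : ℝ → En n × ℝ → ℝ) (hs0 : 0 < s) (hs : s < 1 / 2)
    (hu : IsFracHeatSolution (1 - 2 * s) u)
    (he : e ≤ 0) (hL : 2 * n * m + 2 * l * (2 - 2 * s) ≤ 0) (hk : 2 * s * h ≤ k)
    (h1 : ∀ t ∈ Icc (-1:ℝ) T, ∀ p ∈ closedSpherePlus n, u t p ≤ barr s c k e m l h b t p)
    (h2 : ∀ x : En n, ‖x‖ ≤ 1 → u (-1) (x, 0) ≤ barr s c k e m l h b (-1) (x, 0)) :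
    ∀ t ∈ Icc (-1:ℝ) T, ∀ p ∈ closedHalfBall n 1, u t p ≤ barr s c k e m l h b t p := by
  intro t0 ht0 p hp
  by_contra hc
  push Not at hc
  obtain ⟨hcont, hharm, hbd⟩ := hu
  set ε := (u t0 p - barr s c k e m l h b t0 p) / 4 with hε
  have hε0 : 0 < ε := by rw [hε]; linarith
  have hform : ∀ t q, barr s (c + 2 * ε) (k + ε) e m (l - ε) h b t q =
      barr s c k e m l h b t q + ε * (2 + t - q.2 ^ 2) := by
    intro t q; simp only [barr]; ring
  have hbc := barr_continuous s (c + 2 * ε) (k + ε) e m (l - ε) h hs0 b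
  have hsub : Icc (-1:ℝ) T ×ˢ closedHalfBall n 1 ⊆ Icc (-1:ℝ) 0 ×ˢ closedHalfBall n 1 :=
    prod_mono (Icc_subset_Icc_right hT.2) subset_rfl
  obtain ⟨⟨t, q⟩, ⟨ht, hq⟩, hqm⟩ := (isCompact_Icc.prod (isCompact_closedHalfBall n)).exists_isMaxOn
    ⟨(t0, p), ⟨ht0, hp⟩⟩ ((hcont.mono hsub).sub hbc.continuousOn)
  simp only at ht hq
  have hmx : ∀ t' ∈ Icc (-1:ℝ) T, ∀ q' ∈ closedHalfBall n 1,
      u t' q' - barr s (c + 2 * ε) (k + ε) e m (l - ε) h b t' q' ≤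
      u t q - barr s (c + 2 * ε) (k + ε) e m (l - ε) h b t q := by
    intro t' ht' q' hq'
    exact hqm (show (t', q') ∈ _ from ⟨ht', hq'⟩)
  have hqp := hmx t0 ht0 p hp
  simp only [hform] at hqp
  have hp2 : p.2 ^ 2 ≤ 1 := by nlinarith [hp.1, sq_nonneg ‖p.1‖]
  have hq2 : q.2 ^ 2 ≤ 1 := by nlinarith [hq.1, sq_nonneg ‖q.1‖]
  have ht1 := ht.1
  have ht2 := ht.2.trans hT.2
  have ht02 := ht0.2.trans hT.2
  have hqpos : 0 < u t q - barr s c k e m l h b t q := by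
    nlinarith [sq_nonneg p.2, sq_nonneg q.2]
  rcases hq.1.eq_or_lt with hS | hS
  · have := h1 t ht q ⟨by linarith, hq.2⟩
    linarith
  rcases hq.2.eq_or_lt with hy | hy
  · rcases ht1.eq_or_lt with htt | htt
    · have := h2 q.1 (by have := hq.1; rw [← hy] at this; nlinarith [norm_nonneg q.1])
      rw [show (q.1, (0:ℝ)) = q by rw [hy], htt] at this
      linarith
    obtain ⟨x, y⟩ := q
    simp only at hy hS
    subst hy
    have hx1 : ‖x‖ < 1 := by nlinarith [norm_nonneg x]
    obtain ⟨hd, hN⟩ := hbd t ⟨htt, ht2⟩ x hx1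
    set D := derivWithin (fun τ => u τ (x, 0)) (Ioc (-1 : ℝ) 0) t with hD
    have hDk : k + ε ≤ D := by
      have hd1 : HasDerivWithinAt (fun τ => u τ (x, 0)) D (Ioo (-1 : ℝ) t) t :=
        hd.hasDerivWithinAt.mono fun z hz => ⟨hz.1, hz.2.le.trans ht2⟩
      rw [hasDerivWithinAt_iff_tendsto_slope' (by simp)] at hd1
      have hne : (𝓝[Ioo (-1:ℝ) t] t).NeBot := by
        rw [nhdsWithin_Ioo_eq_nhdsLT htt]; infer_instance
      refine ge_of_tendsto hd1 ?_
      filter_upwards [self_mem_nhdsWithin] with τ hτ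
      have := hmx τ ⟨hτ.1.le, hτ.2.le.trans ht.2⟩ (x, 0) hq
      simp only [barr] at this
      rw [slope_def_field, le_div_iff_of_neg (by linarith [hτ.2])]
      nlinarith
    -- normal derivative
    set w := fun y : ℝ => barr s (c + 2 * ε) (k + ε) e m (l - ε) h b t (x, y) with hw
    have hlim : Tendsto (fun y : ℝ => y ^ (1 - 2 * s) * (fderiv ℝ (u t) (x, y) (0, 1) -
        (e + 2 * (l - ε) * y + h * (2 * s * y ^ (2 * s - 1))))) (𝓝[>] 0)
        (𝓝 (D - 2 * s * h)) := by
      have hA : Tendsto (fun y : ℝ => y ^ (1 - 2 * s) * (e + 2 * (l - ε) * y)) (𝓝[>] 0)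
          (𝓝 0) := by
        have : Continuous (fun y : ℝ => y ^ (1 - 2 * s) * (e + 2 * (l - ε) * y)) :=
          (Continuous.rpow_const continuous_id (fun _ => Or.inr (by linarith))).mul (by fun_prop)
        have := (this.tendsto 0).mono_left (nhdsWithin_le_nhds (s := Ioi 0))
        rwa [Real.zero_rpow (by linarith), zero_mul] at this
      have hB := (hN.sub hA).sub_const (2 * s * h)
      rw [sub_zero] at hB
      refine hB.congr' ?_
      filter_upwards [self_mem_nhdsWithin] with y hy
      have : y ^ (1 - 2 * s) * y ^ (2 * s - 1) = 1 := by
        rw [← Real.rpow_add hy]; simp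
      linear_combination (2 * s * h) * this
    have hpos : ∀ᶠ y in 𝓝[>] (0:ℝ), 0 < y ^ (1 - 2 * s) * (fderiv ℝ (u t) (x, y) (0, 1) -
        (e + 2 * (l - ε) * y + h * (2 * s * y ^ (2 * s - 1)))) :=
      hlim.eventually (lt_mem_nhds (by linarith))
    have hnear : ∀ᶠ y in 𝓝[>] (0:ℝ), y < 1 - ‖x‖ :=
      nhdsWithin_le_nhds (gt_mem_nhds (by linarith))
    obtain ⟨δ, hδ, hδs⟩ := mem_nhdsGT_iff_exists_Ioc_subset.1 (hpos.and hnear)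
    have hδ0 : (0:ℝ) < δ := hδ
    have hmem : ∀ y ∈ Icc 0 δ, (x, y) ∈ closedHalfBall n 1 := by
      intro y hy
      have hδ1 := (hδs (show δ ∈ Ioc 0 δ from ⟨hδ0, le_rfl⟩)).2
      refine ⟨?_, hy.1⟩
      have h3 := norm_nonneg x
      have h4 := hy.1
      have h5 := hy.2
      simp only
      nlinarith
    have hmono : StrictMonoOn (fun y => u t (x, y) - w y) (Icc 0 δ) := by
      apply strictMonoOn_of_deriv_pos (convex_Icc 0 δ)
      · apply ContinuousOn.sub
        · exact hcont.comp (f := fun y : ℝ => (t, (x, y))) (by fun_prop)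
            (fun y hy => ⟨⟨ht1, ht2⟩, hmem y hy⟩)
        · exact (hbc.comp (by fun_prop : Continuous fun y : ℝ => (t, (x, y)))).continuousOn
      · intro y hy
        rw [interior_Icc] at hy
        obtain ⟨g1, g2⟩ := hδs (show y ∈ Ioc 0 δ from ⟨hy.1, hy.2.le⟩)
        have hyin : (x, y) ∈ halfBall n 1 := by
          refine ⟨?_, hy.1⟩
          have h3 := norm_nonneg x
          have h4 := hy.1
          simp only at g2 ⊢
          nlinarith
        have hdu : DifferentiableAt ℝ (u t) (x, y) :=
          ((hharm t ⟨ht1, ht2⟩).1.contDiffAt ((isOpen_halfBall n 1).mem_nhds hyin)).differentiableAt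
            (by simp)
        have hl : HasDerivAt (fun y : ℝ => ((x, y) : En n × ℝ)) (0, 1) y :=
          (hasDerivAt_const y x).prodMk (hasDerivAt_id y)
        have hd1 := hdu.hasFDerivAt.comp_hasDerivAt y hl
        have hd2 := barr_deriv_y s (c + 2 * ε) (k + ε) e m (l - ε) h b t x y hy.1
        have hd3 := hd1.sub hd2
        have hd4 : deriv (fun y => u t (x, y) - w y) y = _ := hd3.deriv
        rw [hd4]
        exact pos_of_mul_pos_right g1 (Real.rpow_nonneg hy.1.le _)
    have hlt := hmono (left_mem_Icc.2 hδ0.le) (right_mem_Icc.2 hδ0.le) hδ0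
    have := hmx t ht (x, δ) (hmem δ (right_mem_Icc.2 hδ0.le))
    simp only [hw] at hlt
    linarith
  have hqi : q ∈ halfBall n 1 := ⟨hS, hy⟩
  refine no_interior_max s (c + 2 * ε) (k + ε) e m (l - ε) h b t (u t) hs (hharm t ⟨ht1, ht2⟩)
    he (by nlinarith) q hqi ?_
  filter_upwards [(isOpen_halfBall n 1).mem_nhds hqi] with z hz
  exact hmx t ht z ⟨hz.1.le, hz.2.le⟩

/-- The hypotheses of the theorem, bundled. -/
structure BHyp {n : ℕ} (s α : ℝ) (u : ℝ → En n × ℝ → ℝ) (C₀ : ℝ) : Prop where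
  hs0 : 0 < s
  hs : s < 1 / 2
  hα0 : 0 < α
  hα1 : α ≤ 1
  sol : IsFracHeatSolution (1 - 2 * s) u
  hC : 0 ≤ C₀
  bd : ∀ t ∈ Icc (-1 : ℝ) 0, ∀ p ∈ closedHalfBall n 1, |u t p| ≤ C₀
  init : ∀ p ∈ closedHalfBall n 1, ∀ q ∈ closedHalfBall n 1,
        |u (-1) p - u (-1) q| ≤ C₀ * (‖p.1 - q.1‖ + |p.2 - q.2|) ^ α
  lat : ∀ t ∈ Icc (-1 : ℝ) 0, ∀ t' ∈ Icc (-1 : ℝ) 0, ∀ x : En n, ‖x‖ = 1 →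
        |u t (x, 0) - u t' (x, 0)| ≤ C₀ * |t - t'| ^ α
  sph : ∀ t ∈ Icc (-1 : ℝ) 0, ∀ p ∈ closedSpherePlus n, ∀ q ∈ closedSpherePlus n,
        |u t p - u t q| ≤ C₀ * (‖p.1 - q.1‖ + |p.2 - q.2|) ^ α

lemma IsAHarmonicOn.neg' {n : ℕ} {a : ℝ} {u : En n × ℝ → ℝ} {Ω : Set (En n × ℝ)}
    (h : IsAHarmonicOn a u Ω) : IsAHarmonicOn a (fun p => - u p) Ω := by
  refine ⟨h.1.neg, fun p hp => ?_⟩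
  have := h.2 p hp
  simp only [lap, D2, fderiv_fun_neg, neg_apply, Finset.sum_neg_distrib] at this ⊢
  linarith

lemma BHyp.neg {n : ℕ} {s α : ℝ} {u : ℝ → En n × ℝ → ℝ} {C₀ : ℝ} (h : BHyp s α u C₀) :
    BHyp s α (fun t p => - u t p) C₀ := by
  refine ⟨h.hs0, h.hs, h.hα0, h.hα1, ⟨h.sol.1.neg, fun t ht => (h.sol.2.1 t ht).neg', ?_⟩, h.hC,
    ?_, ?_, ?_, ?_⟩
  · intro t ht x hx
    obtain ⟨h1, h2⟩ := h.sol.2.2 t ht x hx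
    refine ⟨h1.neg, ?_⟩
    rw [derivWithin.fun_neg]
    unfold NormalDerivLimit at h2 ⊢
    simp only [fderiv_fun_neg, neg_apply, mul_neg]
    exact h2.neg
  · intro t ht p hp
    rw [abs_neg]; exact h.bd t ht p hp
  · intro p hp q hq
    rw [neg_sub_neg, abs_sub_comm]; exact h.init p hp q hq
  · intro t ht t' ht' x hx
    rw [neg_sub_neg, abs_sub_comm]; exact h.lat t ht t' ht' x hx
  · intro t ht p hp q hq
    rw [neg_sub_neg, abs_sub_comm]; exact h.sph t ht p hp q hq

lemma tangent_bd (θ z z0 : ℝ) (hθ0 : 0 ≤ θ) (hθ : θ ≤ 1) (hz : 0 ≤ z) (hz0 : 0 < z0) :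
    z ^ θ ≤ z0 ^ θ + z0 ^ (θ - 1) * z := by
  rcases le_total z z0 with h | h
  · have := Real.rpow_le_rpow hz h hθ0
    have h2 : 0 ≤ z0 ^ (θ - 1) * z := mul_nonneg (Real.rpow_nonneg hz0.le _) hz
    linarith
  · have hzp : 0 < z := hz0.trans_le h
    have h1 : z ^ θ = z ^ (θ - 1) * z := by
      rw [← Real.rpow_add_one hzp.ne']; congr 1; ring
    have h2 : z ^ (θ - 1) ≤ z0 ^ (θ - 1) := Real.rpow_le_rpow_of_nonpos hz0 h (by linarith)
    have h3 : 0 ≤ z0 ^ θ := Real.rpow_nonneg hz0.le _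
    rw [h1]
    nlinarith

/-- if `d² ≤ 4 φ` then `d^(2θ)` is below the tangent-type line. -/
lemma tangent_bd2 (θ d φ r : ℝ) (hθ0 : 0 ≤ θ) (hθ : θ ≤ 1 / 2) (hd : 0 ≤ d) (hφ : d ^ 2 ≤ 4 * φ)
    (hr : 0 < r) : d ^ (2 * θ) ≤ 2 * (r ^ θ + r ^ (θ - 1) * φ) := by
  have hφ0 : 0 ≤ φ := by nlinarith [sq_nonneg d]
  have h1 : d ^ (2 * θ) = (d ^ 2) ^ θ := by
    rw [Real.rpow_mul hd]; norm_num
  have h2 : (d ^ 2) ^ θ ≤ (4 * φ) ^ θ := Real.rpow_le_rpow (sq_nonneg d) hφ hθ0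
  have h3 : (4 * φ) ^ θ = 4 ^ θ * φ ^ θ := Real.mul_rpow (by norm_num) hφ0
  have h4 : (4:ℝ) ^ θ ≤ 2 := by
    calc (4:ℝ) ^ θ ≤ 4 ^ (1 / 2 : ℝ) := Real.rpow_le_rpow_of_exponent_le (by norm_num) hθ
      _ = 2 := by
        rw [← Real.sqrt_eq_rpow, show (4:ℝ) = 2 ^ 2 by norm_num]
        exact Real.sqrt_sq (by norm_num)
  have h5 := tangent_bd θ φ r hθ0 (by linarith) hφ0 hr
  have h6 : 0 ≤ φ ^ θ := Real.rpow_nonneg hφ0 _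
  rw [h1]
  nlinarith

lemma sphere_sub {n : ℕ} {p : En n × ℝ} (hp : p ∈ closedSpherePlus n) : p ∈ closedHalfBall n 1 :=
  ⟨by rw [hp.1]; norm_num, hp.2⟩

lemma phi_bounds {n : ℕ} (p q : En n × ℝ) (hp : p ∈ closedHalfBall n 1)
    (hq : q ∈ closedSpherePlus n) :
    (‖p.1 - q.1‖ + |p.2 - q.2|) ^ 2 ≤ 4 * (1 - ⟪q.1, p.1⟫ - q.2 * p.2) ∧
    1 - ⟪q.1, p.1⟫ - q.2 * p.2 ≤ ‖p.1 - q.1‖ + |p.2 - q.2| := by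
  have hp1 := hp.1
  have hq1 := hq.1
  have e1 := norm_sub_sq_real p.1 q.1
  rw [real_inner_comm] at e1
  have e2 : |p.2 - q.2| ^ 2 = (p.2 - q.2) ^ 2 := sq_abs _
  constructor
  · nlinarith [sq_nonneg (‖p.1 - q.1‖ - |p.2 - q.2|)]
  · have hqx : ‖q.1‖ ≤ 1 := by nlinarith [norm_nonneg q.1, sq_nonneg q.2]
    have hqy : q.2 ≤ 1 := by nlinarith [hq.2, sq_nonneg ‖q.1‖]
    have h1 : ⟪q.1, q.1 - p.1⟫ ≤ ‖q.1‖ * ‖q.1 - p.1‖ := real_inner_le_norm _ _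
    rw [inner_sub_right, real_inner_self_eq_norm_sq, norm_sub_rev] at h1
    have h2 : q.2 * (q.2 - p.2) ≤ q.2 * |p.2 - q.2| :=
      mul_le_mul_of_nonneg_left (by rw [abs_sub_comm]; exact le_abs_self _) hq.2
    nlinarith [norm_nonneg (p.1 - q.1), abs_nonneg (p.2 - q.2)]

lemma rpow_anti {r a b : ℝ} (hr : 0 < r) (hr1 : r ≤ 1) (hab : b ≤ a) : r ^ a ≤ r ^ b :=
  Real.rpow_le_rpow_of_exponent_ge hr hr1 hab

lemma base_mem {n : ℕ} (x : En n) (hx : ‖x‖ ≤ 1) : ((x, 0) : En n × ℝ) ∈ closedHalfBall n 1 :=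
  ⟨by simp only; nlinarith [norm_nonneg x], le_rfl⟩

lemma exp_aux {s α : ℝ} (hs : s < 1 / 2) (hα : 0 < α) : s * α ≤ α / 2 := by nlinarith

lemma absorb_aux {K C R : ℝ} (hK : 2 ≤ K) (hC : 0 ≤ C) (hR : 1 ≤ R) : 2 * C ≤ K * C * R := by
  have h1 : 2 * C ≤ K * C := mul_le_mul_of_nonneg_right hK hC
  have h2 : K * C * 1 ≤ K * C * R :=
    mul_le_mul_of_nonneg_left hR (mul_nonneg (by linarith) hC)
  linarith

lemma sq_le_aux {ρ : ℝ} (h0 : 0 < ρ) (h1 : ρ ≤ 1) : ρ ^ 2 ≤ ρ := by nlinarith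

lemma q_aux {n : ℕ} {q : En n × ℝ} (hq : q ∈ closedSpherePlus n) :
    ‖q.1‖ ≤ 1 ∧ q.2 ≤ 1 ∧ 1 - ‖q.1‖ ≤ q.2 ^ 2 ∧ q.2 ^ 2 / 2 ≤ 1 - ‖q.1‖ := by
  have hq1 := hq.1
  have hq2 := hq.2
  have h0 := norm_nonneg q.1
  have hqx : ‖q.1‖ ≤ 1 := by nlinarith [sq_nonneg q.2]
  exact ⟨hqx, by nlinarith [sq_nonneg ‖q.1‖], by nlinarith, by nlinarith⟩

lemma BHyp.trivial_bd {n : ℕ} {s α : ℝ} {u : ℝ → En n × ℝ → ℝ} {C₀ : ℝ} (h : BHyp s α u C₀)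
    {t t' : ℝ} (ht : t ∈ Icc (-1:ℝ) 0) (ht' : t' ∈ Icc (-1:ℝ) 0) {p q : En n × ℝ}
    (hp : p ∈ closedHalfBall n 1) (hq : q ∈ closedHalfBall n 1) : u t p - u t' q ≤ 2 * C₀ := by
  have h1 := abs_le.1 (h.bd t ht p hp)
  have h2 := abs_le.1 (h.bd t' ht' q hq)
  linarith

lemma BHyp.estA0 {n : ℕ} {s α : ℝ} {u : ℝ → En n × ℝ → ℝ} {C₀ : ℝ} (h : BHyp s α u C₀)
    {T : ℝ} (hT : T ∈ Icc (-1:ℝ) 0) (X : En n × ℝ) (hX : X ∈ closedHalfBall n 1)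
    (z : En n) (hz : ‖z‖ = 1) (r : ℝ) (hr : 0 < r) (hXr : ‖X.1 - z‖ + X.2 ≤ r) :
    u T X - u T (z, 0) ≤ (5 + 2 / s) * C₀ * r ^ (s * α) := by
  have hs0 := h.hs0
  have hs := h.hs
  have hα0 := h.hα0
  have hα1 := h.hα1
  have hC := h.hC
  have hzS : ((z, 0) : En n × ℝ) ∈ closedSpherePlus n := ⟨by simp [hz], le_rfl⟩
  have h2s : 0 < 2 / s := by positivity
  rcases lt_or_ge 1 r with hr1 | hr1
  · have h1 := h.trivial_bd hT hT hX (sphere_sub hzS)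
    have h2 : 1 ≤ r ^ (s * α) := Real.one_le_rpow hr1.le (by positivity)
    exact h1.trans (absorb_aux (by linarith) hC h2)
  set A := r ^ (α / 2) with hA
  set B := r ^ (α / 2 - 1) with hB
  set A' := r ^ s with hA'
  set B' := r ^ (s - 1) with hB'
  set A'' := A' ^ α with hA''
  set B'' := A' ^ (α - 1) with hB''
  have hA'0 : 0 < A' := Real.rpow_pos_of_pos hr _
  have hB''0 : 0 < B'' := Real.rpow_pos_of_pos hA'0 _
  have hB0 : 0 < B := Real.rpow_pos_of_pos hr _
  have hB'0 : 0 < B' := Real.rpow_pos_of_pos hr _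
  have hA''0 : 0 < A'' := Real.rpow_pos_of_pos hA'0 _
  -- total slope in Φ
  set G := C₀ * (2 * B + B'' / s * B') with hG
  set c0 := u T (z, 0) + C₀ * (2 * A + A'' + B'' * (T + A' / s)) + G with hc0
  have hform : ∀ t p, barr s c0 (-(C₀ * B'')) 0 0 0 (-(C₀ * B'' / (2 * s))) (-(G • z)) t p =
      u T (z, 0) + C₀ * (2 * (A + B * (1 - ⟪z, p.1⟫)) + A'' +
        B'' * ((T - t) + (2 * (A' + B' * (1 - ⟪z, p.1⟫)) - p.2 ^ (2 * s)) / (2 * s))) := by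
    intro t p
    simp only [barr, inner_neg_left, inner_smul_left, hc0, hG]
    simp only [conj_trivial]
    field_simp
    ring
  have hphi : ∀ p ∈ closedHalfBall n 1, (‖p.1 - z‖ + p.2) ^ 2 ≤ 4 * (1 - ⟪z, p.1⟫) ∧
      1 - ⟪z, p.1⟫ ≤ ‖p.1 - z‖ + p.2 := by
    intro p hp
    have := phi_bounds p (z, 0) hp hzS
    simpa [abs_of_nonneg hp.2] using this
  have hbnd : ∀ t ∈ Icc (-1:ℝ) T, ∀ p ∈ closedHalfBall n 1,
      |u t p - u t (z, 0)| ≤ C₀ * (‖p.1 - z‖ + p.2) ^ α →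
      u t p ≤ barr s c0 (-(C₀ * B'')) 0 0 0 (-(C₀ * B'' / (2 * s))) (-(G • z)) t p := by
    intro t ht p hp hb
    rw [hform]
    have ht' : t ∈ Icc (-1:ℝ) 0 := ⟨ht.1, ht.2.trans hT.2⟩
    have h1 := (abs_le.1 hb).2
    have h2 := (abs_le.1 (h.lat t ht' T hT z hz)).2
    rw [abs_sub_comm, abs_of_nonneg (sub_nonneg.2 ht.2)] at h2
    have hd0 : 0 ≤ ‖p.1 - z‖ + p.2 := add_nonneg (norm_nonneg _) hp.2
    have h3 := tangent_bd2 (α / 2) _ _ r (by linarith) (by linarith) hd0 (hphi p hp).1 hr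
    rw [show 2 * (α / 2) = α by ring] at h3
    have h4 := tangent_bd α (T - t) A' hα0.le hα1 (sub_nonneg.2 ht.2) hA'0
    have h5 := tangent_bd2 s _ _ r hs0.le hs.le hd0 (hphi p hp).1 hr
    have h6 : p.2 ^ (2 * s) ≤ (‖p.1 - z‖ + p.2) ^ (2 * s) :=
      Real.rpow_le_rpow hp.2 (by linarith [norm_nonneg (p.1 - z)]) (by linarith)
    have h7 : 0 ≤ (2 * (A' + B' * (1 - ⟪z, p.1⟫)) - p.2 ^ (2 * s)) / (2 * s) :=
      div_nonneg (by linarith) (by linarith)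
    have h8 := mul_le_mul_of_nonneg_left h3 hC
    have h9 := mul_le_mul_of_nonneg_left h4 hC
    have h10 := mul_nonneg hC (mul_nonneg hB''0.le h7)
    rw [← hA, ← hB] at h8
    rw [← hA'', ← hB''] at h9
    linarith
  have hcomp := parabolic_comparison s c0 (-(C₀ * B'')) 0 0 0 (-(C₀ * B'' / (2 * s))) (-(G • z)) T hT
    u hs0 hs h.sol le_rfl (by simp) (by field_simp; exact le_rfl)
    (fun t ht p hp => hbnd t ht p (sphere_sub hp) (by
      have := h.sph t ⟨ht.1, ht.2.trans hT.2⟩ p hp (z, 0) hzS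
      simpa [abs_of_nonneg hp.2] using this))
    (fun x hx => by
      have hxm : ((x, 0) : En n × ℝ) ∈ closedHalfBall n 1 := base_mem x (by assumption)
      refine hbnd (-1) ⟨le_rfl, hT.1⟩ (x, 0) hxm ?_
      have := h.init (x, 0) hxm (z, 0) (sphere_sub hzS)
      simpa using this) T ⟨hT.1, le_rfl⟩ X hX
  rw [hform] at hcomp
  have hΦ : 1 - ⟪z, X.1⟫ ≤ r := (hphi X hX).2.trans hXr
  have k1 : B * r = A := by rw [hA, hB, ← Real.rpow_add_one hr.ne']; congr 1; ring
  have k2 : B' * r = A' := by rw [hA', hB', ← Real.rpow_add_one hr.ne']; congr 1; ring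
  have k3 : B'' * A' = A'' := by rw [hA'', hB'', ← Real.rpow_add_one hA'0.ne']; congr 1; ring
  have k4 : A'' = r ^ (s * α) := by rw [hA'', hA', ← Real.rpow_mul hr.le]
  have k5 : A ≤ A'' := by rw [k4, hA]; exact rpow_anti hr hr1 (exp_aux hs hα0)
  have k6 : B * (1 - ⟪z, X.1⟫) ≤ A := by rw [← k1]; exact mul_le_mul_of_nonneg_left hΦ hB0.le
  have k7 : B' * (1 - ⟪z, X.1⟫) ≤ A' := by rw [← k2]; exact mul_le_mul_of_nonneg_left hΦ hB'0.le
  have k8 : (2 * (A' + B' * (1 - ⟪z, X.1⟫)) - X.2 ^ (2 * s)) / (2 * s) ≤ A' * (2 / s) := by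
    rw [div_le_iff₀ (by linarith)]
    have : A' * (2 / s) * (2 * s) = 4 * A' := by field_simp; ring
    rw [this]
    have := Real.rpow_nonneg hX.2 (2 * s)
    linarith
  have k9 : B'' * ((T - T) + (2 * (A' + B' * (1 - ⟪z, X.1⟫)) - X.2 ^ (2 * s)) / (2 * s)) ≤
      A'' * (2 / s) := by
    rw [← k3, sub_self, zero_add, mul_assoc]; exact mul_le_mul_of_nonneg_left k8 hB''0.le
  rw [← k4]
  have k10 : 2 * (A + B * (1 - ⟪z, X.1⟫)) + A'' +
        B'' * ((T - T) + (2 * (A' + B' * (1 - ⟪z, X.1⟫)) - X.2 ^ (2 * s)) / (2 * s)) ≤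
      (5 + 2 / s) * A'' := by linarith
  have k11 := mul_le_mul_of_nonneg_left k10 hC
  linarith

lemma proj_unit {n : ℕ} (x : En n) (hx : x ≠ 0) (hx1 : ‖x‖ ≤ 1) :
    ∃ z : En n, ‖z‖ = 1 ∧ ‖x - z‖ = 1 - ‖x‖ := by
  have hn : 0 < ‖x‖ := norm_pos_iff.2 hx
  refine ⟨‖x‖⁻¹ • x, ?_, ?_⟩
  · rw [norm_smul, norm_inv, norm_norm, inv_mul_cancel₀ hn.ne']
  · have : x - ‖x‖⁻¹ • x = (1 - ‖x‖⁻¹) • x := by rw [sub_smul, one_smul]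
    rw [this, norm_smul, Real.norm_eq_abs, abs_of_nonpos]
    · field_simp; ring
    · have := (one_le_inv₀ hn).2 hx1
      linarith

set_option maxHeartbeats 1000000 in
lemma BHyp.estA {n : ℕ} {s α : ℝ} {u : ℝ → En n × ℝ → ℝ} {C₀ : ℝ} (h : BHyp s α u C₀)
    {T : ℝ} (hT : T ∈ Icc (-1:ℝ) 0) (X : En n × ℝ) (hX : X ∈ closedHalfBall n 1)
    (q : En n × ℝ) (hq : q ∈ closedSpherePlus n) (r : ℝ) (hr : 0 < r)
    (hXr : ‖X.1 - q.1‖ + |X.2 - q.2| ≤ r) :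
    u T X - u T q ≤ (17 + 6 / s) * C₀ * r ^ (s * α / 4) := by
  have hs0 := h.hs0
  have hs := h.hs
  have hα0 := h.hα0
  have hα1 := h.hα1
  have hC := h.hC
  have hsα2 := exp_aux hs hα0
  have hsα : s * α ≤ 1 / 2 := by linarith
  have hsα0 : 0 < s * α := by positivity
  have h6s : 0 < 6 / s := by positivity
  rcases le_or_gt 1 r with hr1 | hr1
  · have h1 := h.trivial_bd hT hT hX (sphere_sub hq)
    have h2 : 1 ≤ r ^ (s * α / 4) := Real.one_le_rpow hr1 (by positivity)
    exact h1.trans (absorb_aux (by linarith) hC h2)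
  set R := r ^ (s * α / 4) with hR
  have hR0 : 0 < R := Real.rpow_pos_of_pos hr _
  have hq1 := hq.1
  have hq2 := hq.2
  obtain ⟨hqx, hqy, hqd, hqd2⟩ := q_aux hq
  set ρ := r ^ (1 / 4 : ℝ) with hρ
  have hρ0 : 0 < ρ := Real.rpow_pos_of_pos hr _
  have hρ4 : ρ ^ 4 = r := by
    rw [hρ, ← Real.rpow_natCast, ← Real.rpow_mul hr.le]; norm_num
  have hρ1 : ρ ≤ 1 := Real.rpow_le_one hr.le hr1.le (by norm_num)
  have hrρ : r ≤ ρ := by rw [← hρ4]; exact pow_le_of_le_one hρ0.le hρ1 (by norm_num)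
  rcases le_or_gt ρ q.2 with hc | hc
  · -- elliptic case
    have hq2p : 0 < q.2 := hρ0.trans_le hc
    set A := r ^ (α / 2) with hA
    set B := r ^ (α / 2 - 1) with hB
    have hB0 : 0 < B := Real.rpow_pos_of_pos hr _
    have hA0 : 0 < A := Real.rpow_pos_of_pos hr _
    set G := C₀ * (2 * B + 4 / q.2 ^ 2) with hG
    have hG0 : 0 ≤ G := by positivity
    have hform : ∀ p, barr s (u T q + C₀ * (2 * A) + G) 0 (-(G * q.2)) 0 0 0 (-(G • q.1)) T p =
        u T q + C₀ * (2 * (A + B * (1 - ⟪q.1, p.1⟫ - q.2 * p.2))) +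
          C₀ * (4 / q.2 ^ 2 * (1 - ⟪q.1, p.1⟫ - q.2 * p.2)) := by
      intro p
      simp only [barr, inner_neg_left, inner_smul_left, hG]
      simp only [conj_trivial]
      ring
    have hΦ0 : ∀ p ∈ closedHalfBall n 1, 0 ≤ 1 - ⟪q.1, p.1⟫ - q.2 * p.2 := by
      intro p hp
      linarith [(phi_bounds p q hp hq).1, sq_nonneg (‖p.1 - q.1‖ + |p.2 - q.2|)]
    have h4q : 0 < 4 / q.2 ^ 2 := by positivity
    have hcomp := elliptic_comparison s (u T q + C₀ * (2 * A) + G) 0 (-(G * q.2)) 0 0 0 (-(G • q.1))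
      T (u T) hs0 hs (h.sol.2.1 T hT)
      (h.sol.1.comp (f := fun p : En n × ℝ => (T, p)) (by fun_prop) (fun p hp => ⟨hT, hp⟩))
      (neg_nonpos.2 (mul_nonneg hG0 hq2)) (by simp)
      (fun p hp => by
        rw [hform]
        have hp' := sphere_sub hp
        have h1 := (abs_le.1 (h.sph T hT p hp q hq)).2
        have h3 := tangent_bd2 (α / 2) _ _ r (by linarith) (by linarith) (by positivity)
          (phi_bounds p q hp' hq).1 hr
        rw [show 2 * (α / 2) = α by ring] at h3
        have h8 := mul_le_mul_of_nonneg_left h3 hC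
        have h9 := mul_nonneg hC (mul_nonneg h4q.le (hΦ0 p hp'))
        linarith)
      (fun x hx => by
        rw [hform]
        have hxm : ((x, 0) : En n × ℝ) ∈ closedHalfBall n 1 := base_mem x (by assumption)
        have h1 := h.trivial_bd hT hT hxm (sphere_sub hq)
        have h2 : q.2 ^ 2 / 2 ≤ 1 - ⟪q.1, x⟫ - q.2 * 0 := by
          have e1 := real_inner_le_norm q.1 x
          have e2 := mul_le_mul_of_nonneg_left hx (norm_nonneg q.1)
          linarith
        have h3 : 4 / q.2 ^ 2 * (q.2 ^ 2 / 2) = 2 := by field_simp; norm_num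
        have h4 := mul_le_mul_of_nonneg_left h2 h4q.le
        rw [h3] at h4
        have h5 := mul_le_mul_of_nonneg_left h4 hC
        have h6 : 0 ≤ 1 - ⟪q.1, x⟫ - q.2 * 0 := le_trans (by positivity) h2
        have h7 : 0 ≤ C₀ * (2 * (A + B * (1 - ⟪q.1, x⟫ - q.2 * 0))) := by positivity
        simp only
        linarith) X hX
    rw [hform] at hcomp
    have hΦ : 1 - ⟪q.1, X.1⟫ - q.2 * X.2 ≤ r := (phi_bounds X q hX hq).2.trans hXr
    have k1 : B * r = A := by rw [hA, hB, ← Real.rpow_add_one hr.ne']; congr 1; ring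
    have k5 : A ≤ R := rpow_anti hr hr1.le (by linarith)
    have k6 : B * (1 - ⟪q.1, X.1⟫ - q.2 * X.2) ≤ A := by
      rw [← k1]; exact mul_le_mul_of_nonneg_left hΦ hB0.le
    have k7 : ρ ≤ R := rpow_anti hr hr1.le (by linarith)
    have k8 : 4 / q.2 ^ 2 * (1 - ⟪q.1, X.1⟫ - q.2 * X.2) ≤ 4 * ρ := by
      have h1 : 4 / q.2 ^ 2 ≤ 4 / ρ ^ 2 := by gcongr
      calc _ ≤ 4 / ρ ^ 2 * r := mul_le_mul h1 hΦ (hΦ0 X hX) (by positivity)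
        _ = 4 * ρ ^ 2 := by rw [← hρ4]; field_simp
        _ ≤ 4 * ρ := by linarith [sq_le_aux hρ0 hρ1]
    have k9 : 2 * (A + B * (1 - ⟪q.1, X.1⟫ - q.2 * X.2)) +
        4 / q.2 ^ 2 * (1 - ⟪q.1, X.1⟫ - q.2 * X.2) ≤ (17 + 6 / s) * R := by
      linarith [mul_pos h6s hR0]
    have k10 := mul_le_mul_of_nonneg_left k9 hC
    linarith
  · -- near the edge
    have hne : q.1 ≠ 0 := by
      intro h0
      rw [h0, norm_zero] at hqd
      have : q.2 ^ 2 < 1 ^ 2 := pow_lt_pow_left₀ (by linarith) hq2 (by norm_num)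
      linarith
    obtain ⟨z, hz, hzd⟩ := proj_unit q.1 hne hqx
    have hzS : ((z, 0) : En n × ℝ) ∈ closedSpherePlus n := ⟨by simp [hz], le_rfl⟩
    have hzd' : ‖q.1 - z‖ ≤ ρ := by rw [hzd]; nlinarith only [hqd, hqy, hq2, hc]
    have h1 := h.estA0 hT X hX z hz (3 * ρ) (by positivity) (by
      have e1 : ‖X.1 - z‖ ≤ ‖X.1 - q.1‖ + ‖q.1 - z‖ := norm_sub_le_norm_sub_add_norm_sub _ _ _
      have e2 := le_abs_self (X.2 - q.2)
      linarith)
    have h2 := (abs_le.1 (h.sph T hT (z, 0) hzS q hq)).2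
    have h3 : ‖z - q.1‖ + |0 - q.2| ≤ 2 * ρ := by
      rw [norm_sub_rev, zero_sub, abs_neg, abs_of_nonneg hq2]; linarith
    have h4 : (‖z - q.1‖ + |0 - q.2|) ^ α ≤ (2 * ρ) ^ α :=
      Real.rpow_le_rpow (by positivity) h3 hα0.le
    have e1 : ρ ^ (s * α) = R := by
      rw [hρ, hR, ← Real.rpow_mul hr.le]; congr 1; ring
    have e2 : ρ ^ α ≤ R := by
      rw [← e1]; exact rpow_anti hρ0 hρ1 (by linarith)
    have e3 : (2 * ρ) ^ α ≤ 2 * R := by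
      rw [Real.mul_rpow (by norm_num) hρ0.le]
      have : (2:ℝ) ^ α ≤ 2 := by
        simpa using Real.rpow_le_rpow_of_exponent_le (by norm_num : (1:ℝ) ≤ 2) hα1
      exact mul_le_mul this e2 (by positivity) (by norm_num)
    have e4 : (3 * ρ) ^ (s * α) ≤ 3 * R := by
      rw [Real.mul_rpow (by norm_num) hρ0.le, e1]
      have : (3:ℝ) ^ (s * α) ≤ 3 := by
        simpa using Real.rpow_le_rpow_of_exponent_le (by norm_num : (1:ℝ) ≤ 3)
          (show s * α ≤ 1 by linarith)
      exact mul_le_mul_of_nonneg_right this hR0.le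
    have e5 := mul_le_mul_of_nonneg_left (h4.trans e3) hC
    have e6 := mul_le_mul_of_nonneg_left e4 (show 0 ≤ (5 + 2 / s) * C₀ by positivity)
    have e7 : (5 + 2 / s) * C₀ * (3 * R) + C₀ * (2 * R) = (17 + 6 / s) * C₀ * R := by ring
    linarith

set_option maxHeartbeats 1000000 in
lemma BHyp.estB {n : ℕ} {s α : ℝ} {u : ℝ → En n × ℝ → ℝ} {C₀ : ℝ} (h : BHyp s α u C₀)
    {T : ℝ} (hT : T ∈ Ioc (-1:ℝ) 0) (x0 : En n) (hx0 : ‖x0‖ ≤ 1) :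
    u T (x0, 0) - u (-1) (x0, 0) ≤ (10 + 2 / s + 3 * n) * C₀ * (T + 1) ^ (s * α / 4) := by
  have hs0 := h.hs0
  have hs := h.hs
  have hα0 := h.hα0
  have hα1 := h.hα1
  have hC := h.hC
  have hsα2 := exp_aux hs hα0
  have hsα : s * α ≤ 1 / 2 := by linarith
  have hsα0 : 0 < s * α := by positivity
  have h2s : 0 < 2 / s := by positivity
  have hn0 : (0:ℝ) ≤ n := Nat.cast_nonneg n
  have hT' : T ∈ Icc (-1:ℝ) 0 := ⟨hT.1.le, hT.2⟩
  have hm1 : (-1:ℝ) ∈ Icc (-1:ℝ) 0 := ⟨le_rfl, by norm_num⟩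
  set τ := T + 1 with hτ
  have hr : 0 < τ := by linarith [hT.1]
  have hr1 : τ ≤ 1 := by linarith [hT.2]
  set R := τ ^ (s * α / 4) with hR
  have hR0 : 0 < R := Real.rpow_pos_of_pos hr _
  set ρ := τ ^ (1 / 4 : ℝ) with hρ
  have hρ0 : 0 < ρ := Real.rpow_pos_of_pos hr _
  have hρ4 : ρ ^ 4 = τ := by
    rw [hρ, ← Real.rpow_natCast, ← Real.rpow_mul hr.le]; norm_num
  have hρ1 : ρ ≤ 1 := Real.rpow_le_one hr.le hr1 (by norm_num)
  have hx0m : ((x0, 0) : En n × ℝ) ∈ closedHalfBall n 1 := base_mem x0 (by assumption)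
  set d := 1 - ‖x0‖ with hd
  rcases le_or_gt ρ d with hc | hc
  · have hd0 : 0 < d := hρ0.trans_le hc
    set κ : ℝ := n / (2 - 2 * s) with hκ
    have hκ0 : 0 ≤ κ := div_nonneg hn0 (by linarith)
    have hκn : κ ≤ n := by rw [hκ, div_le_iff₀ (by linarith)]; nlinarith only [hn0, hs]
    have hκe : κ * (2 - 2 * s) = n := by rw [hκ]; exact div_mul_cancel₀ _ (by linarith)
    set K := κ + 1 with hK
    set A := τ ^ (α / 2) with hA
    set B := τ ^ (α / 2 - 1) with hB
    have hB0 : 0 < B := Real.rpow_pos_of_pos hr _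
    have hA0 : 0 < A := Real.rpow_pos_of_pos hr _
    set G := C₀ * (B + 2 / d ^ 2) with hG
    have hG0 : 0 ≤ G := by positivity
    set w : ℝ → En n × ℝ → ℝ := fun t p =>
      ‖p.1 - x0‖ ^ 2 - κ * p.2 ^ 2 + K * p.2 ^ (2 * s) + 2 * s * K * (t + 1) with hw
    have hform : ∀ t p, barr s (u (-1) (x0, 0) + C₀ * A + G * (‖x0‖ ^ 2 + 2 * s * K))
        (G * (2 * s * K)) 0 G (-(G * κ)) (G * K) (-((2 * G) • x0)) t p =
        u (-1) (x0, 0) + C₀ * (A + B * w t p) + C₀ * (2 / d ^ 2 * w t p) := by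
      intro t p
      simp only [barr, inner_neg_left, inner_smul_left, hG, hw, norm_sub_sq_real]
      simp only [conj_trivial]
      rw [real_inner_comm x0 p.1]
      ring
    have hwlow : ∀ t ∈ Icc (-1:ℝ) T, ∀ p ∈ closedHalfBall n 1,
        ‖p.1 - x0‖ ^ 2 + p.2 ^ 2 ≤ w t p := by
      intro t ht p hp
      simp only [hw]
      have hp1 : p.2 ≤ 1 := by nlinarith only [hp.1, hp.2, sq_nonneg ‖p.1‖]
      have h1 : p.2 ^ 2 ≤ p.2 ^ (2 * s) := by
        rcases hp.2.eq_or_lt with h0 | h0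
        · rw [← h0, Real.zero_rpow (by linarith)]; norm_num
        · rw [← Real.rpow_natCast]
          exact rpow_anti h0 hp1 (by push_cast; linarith)
      have h2 : 0 ≤ 2 * s * K * (t + 1) :=
        mul_nonneg (by positivity) (by linarith [ht.1])
      have h3 := mul_le_mul_of_nonneg_left h1 (show 0 ≤ K by positivity)
      rw [hK] at h3 ⊢
      rw [hK] at h2
      linarith
    have h2d : 0 < 2 / d ^ 2 := by positivity
    have hcomp := parabolic_comparison s (u (-1) (x0, 0) + C₀ * A + G * (‖x0‖ ^ 2 + 2 * s * K))
        (G * (2 * s * K)) 0 G (-(G * κ)) (G * K) (-((2 * G) • x0)) T hT' u hs0 hs h.sol le_rfl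
      (by
        have : 2 * (n:ℝ) * G + 2 * -(G * κ) * (2 - 2 * s) = 0 := by
          linear_combination (-2 * G) * hκe
        linarith)
      (by linarith)
      (fun t ht p hp => by
        rw [hform]
        have hp' := sphere_sub hp
        have h1 := h.trivial_bd (⟨ht.1, ht.2.trans hT.2⟩ : t ∈ Icc (-1:ℝ) 0) hm1 hp' hx0m
        have h2 : d ^ 2 ≤ w t p := by
          refine le_trans ?_ (hwlow t ht p hp')
          rw [norm_sub_sq_real]
          have e1 := real_inner_le_norm p.1 x0
          have e2 := hp.1
          have e3 : ‖p.1‖ ≤ 1 := (q_aux hp).1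
          have e4 := mul_le_mul_of_nonneg_right e3 (norm_nonneg x0)
          rw [hd]
          linarith
        have h3 : 2 / d ^ 2 * d ^ 2 = 2 := by field_simp
        have h4 := mul_le_mul_of_nonneg_left h2 h2d.le
        rw [h3] at h4
        have h5 := mul_le_mul_of_nonneg_left h4 hC
        have h6 : 0 ≤ w t p := le_trans (by positivity) h2
        have h7 : 0 ≤ C₀ * (A + B * w t p) := by positivity
        linarith)
      (fun x hx => by
        rw [hform]
        have hxm : ((x, 0) : En n × ℝ) ∈ closedHalfBall n 1 := base_mem x (by assumption)
        have h1 := (abs_le.1 (h.init (x, 0) hxm (x0, 0) hx0m)).2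
        simp only [sub_self, abs_zero, add_zero] at h1
        have h2 := hwlow (-1) ⟨le_rfl, hT.1.le⟩ (x, 0) hxm
        simp only at h2
        have h6 : 0 ≤ w (-1) (x, 0) := le_trans (by positivity) h2
        have h3 := tangent_bd (α / 2) (w (-1) (x, 0)) τ (by linarith) (by linarith) h6 hr
        have h4 : ‖x - x0‖ ^ α ≤ (w (-1) (x, 0)) ^ (α / 2) := by
          have : ‖x - x0‖ ^ α = (‖x - x0‖ ^ 2) ^ (α / 2) := by
            rw [← Real.rpow_natCast, ← Real.rpow_mul (norm_nonneg _)]; congr 1; push_cast; ring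
          rw [this]
          exact Real.rpow_le_rpow (by positivity) (by linarith) (by linarith)
        have h5 := mul_le_mul_of_nonneg_left (h4.trans h3) hC
        have h7 : 0 ≤ C₀ * (2 / d ^ 2 * w (-1) (x, 0)) := by positivity
        linarith) T ⟨hT.1.le, le_rfl⟩ (x0, 0) hx0m
    rw [hform] at hcomp
    have hwv : w T (x0, 0) = 2 * s * K * τ := by
      simp only [hw, sub_self, norm_zero]
      rw [Real.zero_rpow (by linarith)]; ring
    have hwK : w T (x0, 0) ≤ K * τ := by
      rw [hwv]
      have : 0 ≤ K * τ := by positivity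
      nlinarith only [this, hs]
    have hw0 : 0 ≤ w T (x0, 0) := by rw [hwv]; positivity
    have k1 : B * τ = A := by rw [hA, hB, ← Real.rpow_add_one hr.ne']; congr 1; ring
    have k5 : A ≤ R := rpow_anti hr hr1 (by linarith)
    have k6 : B * w T (x0, 0) ≤ K * A := by
      calc _ ≤ B * (K * τ) := mul_le_mul_of_nonneg_left hwK hB0.le
        _ = K * (B * τ) := by ring
        _ = _ := by rw [k1]
    have k7 : ρ ≤ R := rpow_anti hr hr1 (by linarith)
    have k8 : 2 / d ^ 2 * w T (x0, 0) ≤ 2 * K * ρ := by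
      have h1 : 2 / d ^ 2 ≤ 2 / ρ ^ 2 := by gcongr
      calc _ ≤ 2 / ρ ^ 2 * (K * τ) := mul_le_mul h1 hwK hw0 (by positivity)
        _ = 2 * K * ρ ^ 2 := by rw [← hρ4]; field_simp
        _ ≤ 2 * K * ρ := mul_le_mul_of_nonneg_left (sq_le_aux hρ0 hρ1) (by positivity)
    have hKn : K ≤ n + 1 := by linarith
    have k11 : K * A ≤ (n + 1) * R := mul_le_mul hKn k5 hA0.le (by positivity)
    have k12 : 2 * K * ρ ≤ 2 * (n + 1) * R := mul_le_mul (by linarith) k7 hρ0.le (by positivity)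
    have k9 : (A + B * w T (x0, 0)) + 2 / d ^ 2 * w T (x0, 0) ≤ (10 + 2 / s + 3 * n) * R := by
      linarith [mul_pos h2s hR0]
    have k10 := mul_le_mul_of_nonneg_left k9 hC
    linarith
  · have hne : x0 ≠ 0 := by
      intro h0
      rw [h0, norm_zero] at hd
      linarith
    obtain ⟨z, hz, hzd⟩ := proj_unit x0 hne hx0
    have hzS : ((z, 0) : En n × ℝ) ∈ closedSpherePlus n := ⟨by simp [hz], le_rfl⟩
    have h1 := h.estA0 hT' (x0, 0) hx0m z hz ρ hρ0 (by simp only; linarith)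
    have h2 := (abs_le.1 (h.lat T hT' (-1) hm1 z hz)).2
    have h3 := (abs_le.1 (h.init (z, 0) (sphere_sub hzS) (x0, 0) hx0m)).2
    simp only [sub_self, abs_zero, add_zero] at h3
    rw [norm_sub_rev, hzd] at h3
    rw [show T - -1 = τ by rw [hτ]; ring, abs_of_pos hr] at h2
    have e1 : ρ ^ (s * α) = R := by
      rw [hρ, hR, ← Real.rpow_mul hr.le]; congr 1; ring
    have e2 : (1 - ‖x0‖) ^ α ≤ R := by
      rw [← e1]
      exact (Real.rpow_le_rpow (by linarith) hc.le hα0.le).trans (rpow_anti hρ0 hρ1 (by linarith))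
    have e3 : τ ^ α ≤ R := rpow_anti hr hr1 (by linarith)
    rw [e1] at h1
    have e4 := mul_le_mul_of_nonneg_left e2 hC
    have e5 := mul_le_mul_of_nonneg_left e3 hC
    have e6 : 0 ≤ C₀ * R := by positivity
    linarith [mul_nonneg hn0 e6]

lemma BHyp.absA {n : ℕ} {s α : ℝ} {u : ℝ → En n × ℝ → ℝ} {C₀ : ℝ} (h : BHyp s α u C₀)
    {T : ℝ} (hT : T ∈ Icc (-1:ℝ) 0) (X : En n × ℝ) (hX : X ∈ closedHalfBall n 1)
    (q : En n × ℝ) (hq : q ∈ closedSpherePlus n) :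
    |u T X - u T q| ≤ (17 + 6 / s) * C₀ * (‖X.1 - q.1‖ + |X.2 - q.2|) ^ (s * α / 4) := by
  have hs0 := h.hs0
  have hC := h.hC
  have h0 : 0 ≤ ‖X.1 - q.1‖ + |X.2 - q.2| := by positivity
  rcases h0.eq_or_lt with h1 | h1
  · have e1 : X.1 = q.1 := by
      rw [← sub_eq_zero, ← norm_eq_zero]
      linarith [norm_nonneg (X.1 - q.1), abs_nonneg (X.2 - q.2)]
    have e2 : X.2 = q.2 := by
      rw [← sub_eq_zero, ← abs_eq_zero]
      linarith [norm_nonneg (X.1 - q.1), abs_nonneg (X.2 - q.2)]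
    rw [Prod.ext e1 e2]
    rw [sub_self, abs_zero]
    positivity
  · have h2 := h.estA hT X hX q hq _ h1 le_rfl
    have h3 := h.neg.estA hT X hX q hq _ h1 le_rfl
    rw [abs_le]; constructor <;> linarith

lemma BHyp.absB {n : ℕ} {s α : ℝ} {u : ℝ → En n × ℝ → ℝ} {C₀ : ℝ} (h : BHyp s α u C₀)
    {T : ℝ} (hT : T ∈ Icc (-1:ℝ) 0) (x0 : En n) (hx0 : ‖x0‖ ≤ 1) :
    |u T (x0, 0) - u (-1) (x0, 0)| ≤
      (10 + 2 / s + 3 * n) * C₀ * (T + 1) ^ (s * α / 4) := by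
  have hs0 := h.hs0
  have hC := h.hC
  rcases hT.1.eq_or_lt with h1 | h1
  · rw [← h1, sub_self, abs_zero]
    have : (0:ℝ) ≤ (-1 + 1) ^ (s * α / 4) := Real.rpow_nonneg (by norm_num) _
    positivity
  · have h2 := h.estB ⟨h1, hT.2⟩ x0 hx0
    have h3 := h.neg.estB ⟨h1, hT.2⟩ x0 hx0
    rw [abs_le]; constructor <;> linarith

lemma closed_bd {n : ℕ} (v : En n × ℝ → ℝ) (C₀ : ℝ) (hc : ContinuousOn v (closedHalfBall n 1))
    (hb : ∀ p ∈ halfBall n 1, |v p| ≤ C₀) : ∀ p ∈ closedHalfBall n 1, |v p| ≤ C₀ := by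
  rintro ⟨x, y⟩ ⟨hp1, hp2⟩
  simp only at hp1 hp2
  -- approach by points `((1-r) x, (1-r) y + r/2)`
  set f : ℝ → En n × ℝ := fun r => ((1 - r) • x, (1 - r) * y + r / 2) with hf
  have hin : ∀ r ∈ Ioo (0:ℝ) 1, f r ∈ halfBall n 1 := by
    intro r hr
    have h1 := hr.1
    have h2 := hr.2
    refine ⟨?_, ?_⟩
    · simp only [hf, norm_smul, Real.norm_eq_abs, mul_pow, sq_abs]
      have hy1 : y ≤ 1 := by nlinarith [sq_nonneg ‖x‖]
      have e1 : (1 - r) ^ 2 * (‖x‖ ^ 2 + y ^ 2) ≤ (1 - r) ^ 2 * 1 ^ 2 :=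
        mul_le_mul_of_nonneg_left hp1 (sq_nonneg _)
      have e2 : r * ((1 - r) * y) ≤ r * ((1 - r) * 1) := by
        apply mul_le_mul_of_nonneg_left _ h1.le
        exact mul_le_mul_of_nonneg_left hy1 (by linarith)
      nlinarith
    · simp only [hf]
      have : 0 ≤ (1 - r) * y := mul_nonneg (by linarith) hp2
      linarith
  have hfc : Continuous f := by fun_prop
  have hf0 : f 0 = (x, y) := by simp [hf]
  have ht : Tendsto f (𝓝[>] 0) (𝓝[closedHalfBall n 1] (x, y)) := by
    rw [tendsto_nhdsWithin_iff]
    refine ⟨?_, ?_⟩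
    · rw [← hf0]; exact (hfc.tendsto 0).mono_left nhdsWithin_le_nhds
    · filter_upwards [Ioo_mem_nhdsGT (show (0:ℝ) < 1 by norm_num)] with r hr
      exact ⟨(hin r hr).1.le, (hin r hr).2.le⟩
  have h1 := ((hc (x, y) ⟨hp1, hp2⟩).tendsto.comp ht).abs
  refine le_of_tendsto h1 ?_
  filter_upwards [Ioo_mem_nhdsGT (show (0:ℝ) < 1 by norm_num)] with r hr
  exact hb _ (hin r hr)

/-- **Lemma 4.6 (main boundary estimate).** If a bounded solution of the localized
fractional heat equation has `C^α` data on the parabolic boundary, then `u` separates with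
a Hölder modulus `α̃` from its value at the closest boundary point: the closest point of
`{t} × (∂B_1)^+` when `y > 0`, and the closest point of
`({-1} × B_1^0) ∪ ([-1,0] × ∂B_1^0)` when `y = 0`. -/
theorem parabolic_boundary_continuity (n : ℕ) (hn : 1 ≤ n) (s : ℝ)
    (hs : s ∈ Ioo (0 : ℝ) (1/2)) (α : ℝ) (hα : α ∈ Ioc (0 : ℝ) 1) :
    ∃ C > 0, ∃ αt ∈ Ioo (0 : ℝ) 1, ∀ (u : ℝ → En n × ℝ → ℝ) (C₀ : ℝ),
      IsFracHeatSolution (1 - 2*s) u →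
      0 ≤ C₀ →
      (∀ t ∈ Icc (-1 : ℝ) 0, ∀ p ∈ halfBall n 1, |u t p| ≤ C₀) →
      (∀ p ∈ closedHalfBall n 1, ∀ q ∈ closedHalfBall n 1,
        |u (-1) p| ≤ C₀ ∧
        |u (-1) p - u (-1) q| ≤ C₀ * (‖p.1 - q.1‖ + |p.2 - q.2|) ^ α) →
      (∀ t ∈ Icc (-1 : ℝ) 0, ∀ t' ∈ Icc (-1 : ℝ) 0, ∀ x x' : En n, ‖x‖ = 1 → ‖x'‖ = 1 →
        |u t (x, 0)| ≤ C₀ ∧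
        |u t (x, 0) - u t' (x', 0)| ≤ C₀ * (|t - t'| + ‖x - x'‖) ^ α) →
      (∀ t ∈ Icc (-1 : ℝ) 0, ∀ p ∈ closedSpherePlus n, ∀ q ∈ closedSpherePlus n,
        |u t p| ≤ C₀ ∧
        |u t p - u t q| ≤ C₀ * (‖p.1 - q.1‖ + |p.2 - q.2|) ^ α) →
      ∀ t ∈ Icc (-1 : ℝ) 0, ∀ p ∈ closedHalfBall n 1,
        (0 < p.2 →
          ∀ q ∈ closedSpherePlus n,
            (∀ q' ∈ closedSpherePlus n,
              ‖p.1 - q.1‖^2 + (p.2 - q.2)^2 ≤ ‖p.1 - q'.1‖^2 + (p.2 - q'.2)^2) →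
            |u t p - u t q| ≤ C * C₀ * (‖p.1 - q.1‖ + |p.2 - q.2|) ^ αt) ∧
        (p.2 = 0 →
          ∀ (t' : ℝ) (x' : En n),
            ((t' = -1 ∧ ‖x'‖ ≤ 1) ∨ (t' ∈ Icc (-1 : ℝ) 0 ∧ ‖x'‖ = 1)) →
            (∀ (t'' : ℝ) (x'' : En n),
              ((t'' = -1 ∧ ‖x''‖ ≤ 1) ∨ (t'' ∈ Icc (-1 : ℝ) 0 ∧ ‖x''‖ = 1)) →
              (t - t')^2 + ‖p.1 - x'‖^2 ≤ (t - t'')^2 + ‖p.1 - x''‖^2) →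
            |u t p - u t' (x', 0)| ≤ C * C₀ * (‖p.1 - x'‖ + |t - t'|) ^ αt) := by
  obtain ⟨hs0, hs1⟩ := hs
  obtain ⟨hα0, hα1⟩ := hα
  have hn0 : (0:ℝ) ≤ n := Nat.cast_nonneg n
  refine ⟨27 + 8 / s + 3 * n, by positivity, s * α / 4, ⟨by positivity, by nlinarith⟩, ?_⟩
  intro u C₀ hsol hC hbd hinit hlat hsph
  have H : BHyp s α u C₀ := by
    refine ⟨hs0, hs1, hα0, hα1, hsol, hC, ?_, fun p hp q hq => (hinit p hp q hq).2, ?_,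
      fun t ht p hp q hq => (hsph t ht p hp q hq).2⟩
    · intro t ht
      apply closed_bd
      · exact hsol.1.comp (f := fun p : En n × ℝ => (t, p)) (by fun_prop) (fun p hp => ⟨ht, hp⟩)
      · exact hbd t ht
    · intro t ht t' ht' x hx
      have := (hlat t ht t' ht' x x hx hx).2
      simpa using this
  have hdiv : 8 / s = 6 / s + 2 / s := by ring
  have h6 : 0 < 6 / s := by positivity
  have h2 : 0 < 2 / s := by positivity
  have hle1 : (17 + 6 / s) * C₀ ≤ (27 + 8 / s + 3 * n) * C₀ :=
    mul_le_mul_of_nonneg_right (by linarith) hC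
  have hle2 : (10 + 2 / s + 3 * n) * C₀ ≤ (27 + 8 / s + 3 * n) * C₀ :=
    mul_le_mul_of_nonneg_right (by linarith) hC
  intro t ht p hp
  refine ⟨?_, ?_⟩
  · intro _ q hq _
    refine (H.absA ht p hp q hq).trans ?_
    exact mul_le_mul_of_nonneg_right hle1 (Real.rpow_nonneg (by positivity) _)
  · intro hp0 t' x' hcase hmin
    obtain ⟨x, y⟩ := p
    simp only at hp0 hmin ⊢
    subst hp0
    have hx1 : ‖x‖ ≤ 1 := by
      have := hp.1
      simp only at this
      nlinarith [norm_nonneg x]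
    rcases hcase with ⟨h1, h3⟩ | ⟨h1, h3⟩
    · have := hmin (-1) x (Or.inl ⟨rfl, hx1⟩)
      rw [h1, sub_self, norm_zero] at this
      have hxx : ‖x - x'‖ = 0 := by nlinarith [norm_nonneg (x - x')]
      have hxe : x = x' := by rwa [norm_eq_zero, sub_eq_zero] at hxx
      subst hxe
      subst h1
      rw [hxx, zero_add, sub_neg_eq_add, abs_of_nonneg (show 0 ≤ t + 1 by linarith [ht.1])]
      refine (H.absB ht x hx1).trans ?_
      exact mul_le_mul_of_nonneg_right hle2 (Real.rpow_nonneg (by linarith [ht.1]) _)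
    · have := hmin t x' (Or.inr ⟨ht, h3⟩)
      have htt : (t - t') ^ 2 = 0 := by nlinarith [sq_nonneg (t - t')]
      have hte : t = t' := by
        rw [← sub_eq_zero]; exact pow_eq_zero_iff (by norm_num) |>.1 htt
      subst hte
      have hS : ((x', 0) : En n × ℝ) ∈ closedSpherePlus n := ⟨by simp [h3], le_rfl⟩
      have hA := H.absA ht (x, 0) hp (x', 0) hS
      simp only [sub_self, abs_zero, add_zero] at hA ⊢
      refine hA.trans ?_
      exact mul_le_mul_of_nonneg_right hle1 (Real.rpow_nonneg (by positivity) _)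

end
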